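/- arXiv:1903.09526 — 2 statements merged into one kernel-verified Lean document; each statement's English description precedes it below -/
import Mathlib

section
/- Let m ≥ 2 be an integer, g ∈ C²([0,1]), η = (η_0,...,η_{m-1}) ∈ ℝ^m, and let u be the unique bounded 0-harmonic function on T_m with boundary datum g (explicitly, u(x) = ⨍_{I_x} g(t) dt). Then there is a constant C ≥ 0 (depending only on g, η and m) such that for every x ∈ T_m, |Σ_{i=0}^{m-1} η_i·(u((x,i)) − u(x)) − g'(t_x)·m^{−|x|}·Σ_{i=0}^{m-1} η_i·(2i+1−m)/(2m)| ≤ C·m^{−2|x|}, where t_x := ψ(x) + (1/2)·m^{−|x|} is the midpoint of I_x. -/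
open MeasureTheory Filter

noncomputable def psiV (m : ℕ) (x : List (Fin m)) : ℝ :=
  ∑ i : Fin x.length, ((x.get i : ℕ) : ℝ) * ((m : ℝ) ^ (i.1 + 1))⁻¹

noncomputable def psiB (m : ℕ) (π : ℕ → Fin m) : ℝ :=
  ∑' k : ℕ, ((π k : ℕ) : ℝ) * ((m : ℝ) ^ (k + 1))⁻¹

def trunc (m : ℕ) (π : ℕ → Fin m) (k : ℕ) : List (Fin m) :=
  List.ofFn (fun i : Fin k => π i)

noncomputable def Ix (m : ℕ) (x : List (Fin m)) : Set ℝ :=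
  Set.Icc (psiV m x) (psiV m x + ((m : ℝ) ^ x.length)⁻¹)

def BHarmonic (m : ℕ) (β : ℝ) (u : List (Fin m) → ℝ) : Prop :=
  u [] = (1 / (m : ℝ)) * ∑ j : Fin m, u [j] ∧
  ∀ x : List (Fin m), x ≠ [] →
    u x = β * u x.dropLast + ((1 - β) / (m : ℝ)) * ∑ i : Fin m, u (x ++ [i])

def BoundaryDatum (m : ℕ) (u : List (Fin m) → ℝ) (g : ℝ → ℝ) : Prop :=
  ∀ π : ℕ → Fin m,
    Tendsto (fun k => u (trunc m π k)) atTop (nhds (g (psiB m π)))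

def BoundedFun (m : ℕ) (u : List (Fin m) → ℝ) : Prop :=
  ∃ C : ℝ, ∀ x : List (Fin m), |u x| ≤ C

/-!
Both `u (x ++ [i])` and `u x` are averages of `g` over subintervals of `I_x`. Expand `g` to first
order at the midpoint `t_x` of `I_x`: averaging an affine function evaluates it at the midpoint of
the interval, so the difference of the two averages is `g' t_x` times the displacement
`(2 i + 1 - m) / (2 m) * m ^ (-|x|)` of the midpoints, up to the quadratic Taylor remainder on an
interval of length `m ^ (-|x|)`, which the Lipschitz constant of `g'` controls.
-/

open Set
open scoped NNReal

section Calculus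

variable {E : Type*} [NormedAddCommGroup E] [NormedSpace ℝ E]

theorem norm_average_sub_average_le {α : Type*} [MeasurableSpace α] {μ : Measure α}
    [IsFiniteMeasure μ] [NeZero μ] {f g : α → E} (hf : Integrable f μ) (hg : Integrable g μ)
    {C : ℝ} (hC : ∀ᵐ x ∂μ, ‖f x - g x‖ ≤ C) :
    ‖(⨍ x, f x ∂μ) - ⨍ x, g x ∂μ‖ ≤ C := by
  rw [average, average, ← integral_sub hf.to_average hg.to_average]
  simpa using norm_integral_le_of_norm_le_const (Measure.ae_smul_measure hC (μ univ)⁻¹)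

theorem setAverage_Icc_affine [CompleteSpace E] {a b : ℝ} (hab : a < b) (c : ℝ) (p q : E) :
    ⨍ t in Icc a b, (p + (t - c) • q) = p + ((a + b) / 2 - c) • q := by
  have integral_affine :
      ∫ t in a..b, (p + (t - c) • q) = (b - a) • (p + ((a + b) / 2 - c) • q) := by
    rw [intervalIntegral.integral_add (by simp)
        (Continuous.intervalIntegrable (by fun_prop) _ _),
      intervalIntegral.integral_smul_const,
      intervalIntegral.integral_sub (by simp) (by simp)]
    simp only [intervalIntegral.integral_const, integral_id, smul_eq_mul]
    module
  rw [← setAverage_congr Ioc_ae_eq_Icc, ← uIoc_of_le hab.le, interval_average_eq, integral_affine,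
    inv_smul_smul₀ (sub_pos.2 hab).ne']

variable {f f' : ℝ → E} {s : Set ℝ} {K : ℝ≥0}

theorem norm_sub_taylor_le_of_lipschitzOnWith_deriv (hs : Convex ℝ s)
    (hf : ∀ t ∈ s, HasDerivWithinAt f (f' t) s t) (hf' : LipschitzOnWith K f' s)
    {c t : ℝ} (hc : c ∈ s) (ht : t ∈ s) :
    ‖f t - (f c + (t - c) • f' c)‖ ≤ K * (t - c) ^ 2 := by
  have segment_subset : uIcc c t ⊆ s := hs.ordConnected.uIcc_subset hc ht
  have hderiv : ∀ y ∈ uIcc c t,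
      HasDerivWithinAt (fun y ↦ f y - y • f' c) (f' y - f' c) (uIcc c t) y := fun y hy ↦ by
    simpa using ((hf y (segment_subset hy)).mono segment_subset).fun_sub
      ((hasDerivWithinAt_id y _).smul_const (f' c))
  have hbound : ∀ y ∈ uIcc c t, ‖f' y - f' c‖ ≤ K * |t - c| := fun y hy ↦
    (hf'.norm_sub_le (segment_subset hy) hc).trans <| by
      gcongr
      exact abs_sub_left_of_mem_uIcc hy
  calc ‖f t - (f c + (t - c) • f' c)‖
      = ‖(f t - t • f' c) - (f c - c • f' c)‖ := by congr 1; module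
    _ ≤ K * |t - c| * ‖t - c‖ :=
        (convex_uIcc c t).norm_image_sub_le_of_norm_hasDerivWithin_le hderiv hbound
          left_mem_uIcc right_mem_uIcc
    _ = K * (t - c) ^ 2 := by rw [Real.norm_eq_abs, mul_assoc, abs_mul_abs_self, sq]

variable [CompleteSpace E]

theorem norm_setAverage_Icc_sub_taylor_le (hs : Convex ℝ s)
    (hf : ∀ t ∈ s, HasDerivWithinAt f (f' t) s t) (hf' : LipschitzOnWith K f' s)
    {a b c r : ℝ} (hab : a < b) (hsub : Icc a b ⊆ s) (hc : c ∈ s)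
    (hr : ∀ t ∈ Icc a b, |t - c| ≤ r) :
    ‖(⨍ t in Icc a b, f t) - (f c + ((a + b) / 2 - c) • f' c)‖ ≤ K * r ^ 2 := by
  have : NeZero (volume.restrict (Icc a b)) := ⟨by simp [Measure.restrict_eq_zero, hab]⟩
  have hf_int : IntegrableOn f (Icc a b) :=
    ContinuousOn.integrableOn_Icc fun t ht ↦ ((hf t (hsub ht)).mono hsub).continuousWithinAt
  have affine_int : IntegrableOn (fun t ↦ f c + (t - c) • f' c) (Icc a b) :=
    Continuous.integrableOn_Icc (by fun_prop)
  rw [← setAverage_Icc_affine hab]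
  refine norm_average_sub_average_le hf_int affine_int
    (ae_restrict_of_forall_mem measurableSet_Icc fun t ht ↦ ?_)
  calc ‖f t - (f c + (t - c) • f' c)‖
      ≤ K * (t - c) ^ 2 :=
        norm_sub_taylor_le_of_lipschitzOnWith_deriv hs hf hf' hc (hsub ht)
    _ ≤ K * r ^ 2 := by
        rw [← sq_abs]
        gcongr
        exact hr t ht

theorem norm_setAverage_Icc_sub_setAverage_Icc_sub_le {a b a' b' : ℝ}
    (hf : ∀ t ∈ Icc a b, HasDerivWithinAt f (f' t) (Icc a b) t)
    (hf' : LipschitzOnWith K f' (Icc a b)) (hab' : a' < b') (hsub : Icc a' b' ⊆ Icc a b) :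
    ‖(⨍ t in Icc a' b', f t) - (⨍ t in Icc a b, f t) -
        ((a' + b') / 2 - (a + b) / 2) • f' ((a + b) / 2)‖ ≤ K / 2 * (b - a) ^ 2 := by
  obtain ⟨ha, hb⟩ := (Icc_subset_Icc_iff hab'.le).1 hsub
  have hab : a < b := ha.trans_lt (hab'.trans_le hb)
  set c := (a + b) / 2 with hc_def
  have hc : c ∈ Icc a b := ⟨by linarith, by linarith⟩
  have hr : ∀ t ∈ Icc a b, |t - c| ≤ (b - a) / 2 := fun t ht ↦
    abs_le.2 ⟨by linarith [ht.1], by linarith [ht.2]⟩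
  have h_inner := norm_setAverage_Icc_sub_taylor_le (convex_Icc a b) hf hf' hab' hsub hc
    fun t ht ↦ hr t (hsub ht)
  have h_outer := norm_setAverage_Icc_sub_taylor_le (convex_Icc a b) hf hf' hab subset_rfl hc hr
  calc _ = ‖((⨍ t in Icc a' b', f t) - (f c + ((a' + b') / 2 - c) • f' c)) -
        ((⨍ t in Icc a b, f t) - (f c + ((a + b) / 2 - c) • f' c))‖ := by
        rw [← hc_def]; congr 1; module
    _ ≤ K * ((b - a) / 2) ^ 2 + K * ((b - a) / 2) ^ 2 :=
        (norm_sub_le _ _).trans (add_le_add h_inner h_outer)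
    _ = K / 2 * (b - a) ^ 2 := by ring

end Calculus

section Cells

variable {m : ℕ}

theorem psiV_append_singleton (x : List (Fin m)) (i : Fin m) :
    psiV m (x ++ [i]) = psiV m x + (i : ℕ) * ((m : ℝ) ^ (x.length + 1))⁻¹ := by
  have length_eq : x.length + 1 = (x ++ [i]).length := by simp
  unfold psiV
  rw [← Equiv.sum_comp (finCongr length_eq), Fin.sum_univ_castSucc]
  congr 1
  · exact Finset.sum_congr rfl fun k _ ↦ by simp [List.getElem_append_left]
  · simp

theorem Ix_append_singleton_subset (x : List (Fin m)) (i : Fin m) :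
    Ix m (x ++ [i]) ⊆ Ix m x := by
  have hm : (m : ℝ) ≠ 0 := Nat.cast_ne_zero.2 i.pos.ne'
  have right_le : ((i : ℕ) + 1 : ℝ) * ((m : ℝ) ^ (x.length + 1))⁻¹ ≤ ((m : ℝ) ^ x.length)⁻¹ :=
    calc ((i : ℕ) + 1 : ℝ) * ((m : ℝ) ^ (x.length + 1))⁻¹
        ≤ m * ((m : ℝ) ^ (x.length + 1))⁻¹ := by
          gcongr
          exact_mod_cast i.isLt
      _ = ((m : ℝ) ^ x.length)⁻¹ := by rw [pow_succ]; field_simp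
  unfold Ix
  rw [psiV_append_singleton, List.length_append, List.length_singleton]
  refine Icc_subset_Icc (le_add_of_nonneg_right (by positivity)) ?_
  linarith

theorem Ix_subset_Icc (x : List (Fin m)) : Ix m x ⊆ Icc 0 1 := by
  induction x using List.reverseRecOn with
  | nil => simp [Ix, psiV]
  | append_singleton x i ih => exact (Ix_append_singleton_subset x i).trans ih

/-- The midpoint `t_x` of the interval `I_x`, where the derivative is evaluated. -/
noncomputable def cellMidpoint (m : ℕ) (x : List (Fin m)) : ℝ :=
  psiV m x + (1 / 2) * ((m : ℝ) ^ x.length)⁻¹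

theorem cellMidpoint_append_singleton (x : List (Fin m)) (i : Fin m) :
    cellMidpoint m (x ++ [i]) =
      cellMidpoint m x + ((m : ℝ) ^ x.length)⁻¹ * ((2 * (i : ℕ) + 1 - m) / (2 * m)) := by
  have hm : (m : ℝ) ≠ 0 := Nat.cast_ne_zero.2 i.pos.ne'
  simp only [cellMidpoint, psiV_append_singleton, List.length_append, List.length_singleton,
    pow_succ]
  field_simp
  ring

variable {E : Type*} [NormedAddCommGroup E] [NormedSpace ℝ E] [CompleteSpace E]
  {g g' : ℝ → E} {K : ℝ≥0}

theorem norm_setAverage_Ix_append_singleton_sub_le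
    (hg : ∀ t ∈ Icc 0 1, HasDerivWithinAt g (g' t) (Icc 0 1) t)
    (hg' : LipschitzOnWith K g' (Icc 0 1)) (x : List (Fin m)) (i : Fin m) :
    ‖(⨍ t in Ix m (x ++ [i]), g t) - (⨍ t in Ix m x, g t) -
        (((m : ℝ) ^ x.length)⁻¹ * ((2 * (i : ℕ) + 1 - m) / (2 * m))) • g' (cellMidpoint m x)‖ ≤
      K / 2 * ((m : ℝ) ^ (2 * x.length))⁻¹ := by
  have hm : (0 : ℝ) < m := Nat.cast_pos.2 i.pos
  have midpoint_eq (y : List (Fin m)) :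
      (psiV m y + (psiV m y + ((m : ℝ) ^ y.length)⁻¹)) / 2 = cellMidpoint m y := by
    unfold cellMidpoint; ring
  have hsub := Ix_subset_Icc x
  have h := norm_setAverage_Icc_sub_setAverage_Icc_sub_le
    (fun t ht ↦ (hg t (hsub ht)).mono hsub) (hg'.mono hsub)
    (lt_add_of_pos_right (psiV m (x ++ [i])) (by positivity)) (Ix_append_singleton_subset x i)
  rwa [midpoint_eq, midpoint_eq, cellMidpoint_append_singleton, add_sub_cancel_left,
    add_sub_cancel_left, inv_pow, ← pow_mul, mul_comm x.length] at h

theorem stmt9_general (hg : ∀ t ∈ Icc 0 1, HasDerivWithinAt g (g' t) (Icc 0 1) t)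
    (hg' : LipschitzOnWith K g' (Icc 0 1)) (η : Fin m → ℝ) {u : List (Fin m) → E}
    (hu : ∀ x : List (Fin m), u x = ⨍ t in Ix m x, g t) (x : List (Fin m)) :
    ‖∑ i : Fin m, η i • (u (x ++ [i]) - u x) -
        (((m : ℝ) ^ x.length)⁻¹ * ∑ i : Fin m, η i * (2 * (i : ℕ) + 1 - m) / (2 * m)) •
          g' (cellMidpoint m x)‖ ≤
      (K / 2 * ∑ i : Fin m, |η i|) * ((m : ℝ) ^ (2 * x.length))⁻¹ := by
  set δ : Fin m → ℝ := fun i ↦ ((m : ℝ) ^ x.length)⁻¹ * ((2 * (i : ℕ) + 1 - m) / (2 * m))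
  calc _ = ‖∑ i : Fin m, η i • (u (x ++ [i]) - u x - δ i • g' (cellMidpoint m x))‖ := by
        rw [Finset.mul_sum, Finset.sum_smul, ← Finset.sum_sub_distrib]
        refine congrArg norm (Finset.sum_congr rfl fun i _ ↦ ?_)
        rw [mul_div_assoc, mul_left_comm, mul_smul, ← smul_sub]
    _ ≤ ∑ i : Fin m, |η i| * (K / 2 * ((m : ℝ) ^ (2 * x.length))⁻¹) := by
        refine norm_sum_le_of_le _ fun i _ ↦ ?_
        rw [norm_smul, Real.norm_eq_abs, hu, hu]
        gcongr
        exact norm_setAverage_Ix_append_singleton_sub_le hg hg' x i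
    _ = _ := by rw [← Finset.sum_mul]; ring

end Cells

theorem stmt9 (m : ℕ) (hm : 2 ≤ m) (g : ℝ → ℝ) (hg : ContDiffOn ℝ 2 g (Set.Icc 0 1))
    (η : Fin m → ℝ) (u : List (Fin m) → ℝ)
    (hu : ∀ x : List (Fin m), u x = ⨍ t in Ix m x, g t) :
    ∃ C : ℝ, 0 ≤ C ∧ ∀ x : List (Fin m),
      |(∑ i : Fin m, η i * (u (x ++ [i]) - u x)) -
        derivWithin g (Set.Icc 0 1) (psiV m x + (1 / 2) * ((m : ℝ) ^ x.length)⁻¹) *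
          ((m : ℝ) ^ x.length)⁻¹ *
          ∑ i : Fin m, η i * (2 * ((i : ℕ) : ℝ) + 1 - m) / (2 * m)| ≤
      C * ((m : ℝ) ^ (2 * x.length))⁻¹ := by
  obtain ⟨K, hK⟩ := (hg.derivWithin (uniqueDiffOn_Icc one_pos) (by norm_num))
    |>.exists_lipschitzOnWith one_ne_zero (convex_Icc 0 1) isCompact_Icc
  refine ⟨K / 2 * ∑ i, |η i|, by positivity, fun x ↦ ?_⟩
  have hdiff := hg.differentiableOn two_ne_zero
  simpa only [Real.norm_eq_abs, smul_eq_mul, cellMidpoint, mul_comm, mul_left_comm, mul_assoc] using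
    stmt9_general (fun t ht ↦ (hdiff t ht).hasDerivWithinAt) hK η hu x
end

section
/- Let m ≥ 2 be an integer, 0 < β < 1/2, and p = β/(1-β). For x ∈ T_m with x ≠ ∅ and t ∈ I_{x^{-(|x|-1)}}, define n(x,t) := max{n ∈ {1,...,|x|} : t ∈ I_{x^{-(|x|-n)}}}, and for j ∈ {0,...,m-1} define the kernel K_m^j(x,t) = p^{|x|} − (m(1−p)/(m−p))·(p^{|x|} − m^{|x|}) − m^{|x|+1} if t ∈ I_{(x,j)}, and K_m^j(x,t) = p^{|x|}·(1 − (m(1−p)/(m−p))·(1 − (p/m)^{−n(x,t)})·χ_{I_{x^{-(|x|-1)}}}(t)) if t ∉ I_{(x,j)}. Then for every x ≠ ∅ and every j ∈ {0,...,m-1}, ∫_0^1 K_m^j(x,t) dt = 0. -/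
open MeasureTheory Filter

noncomputable def nfun (m : ℕ) (x : List (Fin m)) (t : ℝ) : ℕ :=
  sSup {n : ℕ | 1 ≤ n ∧ n ≤ x.length ∧ t ∈ Ix m (x.take n)}

open Classical in
noncomputable def Kker (m : ℕ) (p : ℝ) (x : List (Fin m)) (j : Fin m) (t : ℝ) : ℝ :=
  if t ∈ Ix m (x ++ [j]) then
    p ^ x.length - ((m : ℝ) * (1 - p) / (m - p)) * (p ^ x.length - (m : ℝ) ^ x.length)
      - (m : ℝ) ^ (x.length + 1)
  else
    p ^ x.length * (1 - ((m : ℝ) * (1 - p) / (m - p)) *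
      (1 - (p / m) ^ (-(nfun m x t : ℤ))) *
      Set.indicator (Ix m (x.take 1)) (fun _ => (1 : ℝ)) t)

/-! Read `n(x,t)` as `0` for `t` outside `I_{x^{-(|x|-1)}}`. Off `I_{(x,j)}` the kernel is then
`w(n(x,t))` with `w(n) = p^|x| (1 - m(1-p)/(m-p) (1 - (m/p)^n))`. Continued to `I_{(x,j)}`, where
`n(x,t) = |x|`, this formula exceeds the kernel by exactly `m^(|x|+1)`, the inverse of the length
of that interval. So it is enough that `∫ w(n(x,t)) dt = 1`. Summation by parts along the nested
intervals `I_{x^{-(|x|-k)}}`, of length `m^{-k}`, turns this integral into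
`w(0) + ∑ k < |x|, (w(k+1) - w(k)) m^{-(k+1)}`, and the constant `m(1-p)/(m-p)` is the one for which
the summand equals `p^|x| (p^{-(k+1)} - p^{-k})`, so that the sum telescopes. -/

section BranchingTree

variable {m : ℕ}

@[simp]
lemma psiV_nil : psiV m [] = 0 := by
  simp [psiV]

lemma psiV_cons (a : Fin m) (x : List (Fin m)) :
    psiV m (a :: x) = ((a : ℕ) + psiV m x) / m := by
  have summand_succ (i : Fin x.length) :
      ((x.get i : ℕ) : ℝ) * ((m : ℝ) ^ ((i : ℕ) + 1 + 1))⁻¹ =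
        ((x.get i : ℕ) : ℝ) * ((m : ℝ) ^ ((i : ℕ) + 1))⁻¹ / m := by
    rw [pow_succ _ ((i : ℕ) + 1), mul_inv, ← mul_assoc, div_eq_mul_inv]
  calc psiV m (a :: x)
      = ((a : ℕ) : ℝ) * ((m : ℝ) ^ (0 + 1))⁻¹
          + ∑ i : Fin x.length, ((x.get i : ℕ) : ℝ) * ((m : ℝ) ^ ((i : ℕ) + 1 + 1))⁻¹ :=
        Fin.sum_univ_succ _
    _ = ((a : ℕ) + psiV m x) / m := by
        simp only [summand_succ, ← Finset.sum_div, zero_add, pow_one, ← div_eq_mul_inv, ← add_div,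
          psiV]

lemma psiV_append (x y : List (Fin m)) :
    psiV m (x ++ y) = psiV m x + psiV m y * ((m : ℝ) ^ x.length)⁻¹ := by
  induction x with
  | nil => simp
  | cons a x ih =>
    rw [List.cons_append, psiV_cons, psiV_cons, ih, List.length_cons, pow_succ, mul_inv]
    ring

lemma psiV_nonneg (x : List (Fin m)) : 0 ≤ psiV m x :=
  Finset.sum_nonneg fun _ _ => by positivity

lemma psiV_add_inv_pow_length_le_one (x : List (Fin m)) :
    psiV m x + ((m : ℝ) ^ x.length)⁻¹ ≤ 1 := by
  induction x with
  | nil => simp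
  | cons a x ih =>
    have hm : (0 : ℝ) < m := Nat.cast_pos.mpr a.pos
    have ha : ((a : ℕ) : ℝ) + 1 ≤ m := by exact_mod_cast a.isLt
    calc psiV m (a :: x) + ((m : ℝ) ^ (a :: x).length)⁻¹
        = ((a : ℕ) + (psiV m x + ((m : ℝ) ^ x.length)⁻¹)) / m := by
          rw [psiV_cons, List.length_cons, pow_succ, mul_inv]
          ring
      _ ≤ 1 := (div_le_one hm).mpr (by linarith)

lemma Ix_subset_Icc_zero_one (x : List (Fin m)) : Ix m x ⊆ Set.Icc 0 1 :=
  Set.Icc_subset_Icc (psiV_nonneg x) (psiV_add_inv_pow_length_le_one x)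

lemma Ix_subset_Ix_of_prefix {x y : List (Fin m)} (h : x <+: y) : Ix m y ⊆ Ix m x := by
  obtain ⟨z, rfl⟩ := h
  have hscale : (0 : ℝ) ≤ ((m : ℝ) ^ x.length)⁻¹ := by positivity
  rw [Ix, Ix, psiV_append, List.length_append, pow_add, mul_inv]
  refine Set.Icc_subset_Icc (le_add_of_nonneg_right (mul_nonneg (psiV_nonneg z) hscale)) ?_
  linarith [mul_le_of_le_one_left hscale (psiV_add_inv_pow_length_le_one z)]

lemma antitone_Ix_take (x : List (Fin m)) : Antitone fun k => Ix m (x.take k) :=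
  fun _ _ hkl => Ix_subset_Ix_of_prefix (List.take_prefix_take_left hkl)

lemma measurableSet_Ix (x : List (Fin m)) : MeasurableSet (Ix m x) :=
  measurableSet_Icc

lemma volume_real_Ix (x : List (Fin m)) : volume.real (Ix m x) = ((m : ℝ) ^ x.length)⁻¹ := by
  rw [Ix, Real.volume_real_Icc_of_le (le_add_of_nonneg_right (by positivity)), add_sub_cancel_left]

section NestedIntervals

variable {x : List (Fin m)} {t : ℝ}

lemma nfun_le_length : nfun m x t ≤ x.length :=
  csSup_le' fun _ hn => hn.2.1

lemma mem_Ix_take_succ_iff_lt_nfun {k : ℕ} (hk : k < x.length) :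
    t ∈ Ix m (x.take (k + 1)) ↔ k < nfun m x t := by
  constructor
  · intro ht
    exact le_csSup ⟨x.length, fun _ hn => hn.2.1⟩ ⟨k.succ_pos, hk, ht⟩
  · intro hlt
    obtain ⟨n, ⟨-, -, htn⟩, hkn⟩ := exists_lt_of_lt_csSup' hlt
    exact antitone_Ix_take x hkn htn

lemma nfun_eq_length_of_mem (hx : x ≠ []) (ht : t ∈ Ix m x) : nfun m x t = x.length := by
  have hlen : 0 < x.length := List.length_pos_iff.mpr hx
  have hlt : x.length - 1 < nfun m x t := by
    rw [← mem_Ix_take_succ_iff_lt_nfun (Nat.sub_lt hlen one_pos), Nat.sub_one_add_one hlen.ne',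
      List.take_length]
    exact ht
  exact nfun_le_length.antisymm (Nat.le_of_pred_lt hlt)

lemma apply_nfun_eq_add_sum_indicator {G : Type*} [AddCommGroup G] (f : ℕ → G) :
    f (nfun m x t) = f 0 + ∑ k ∈ Finset.range x.length,
      (Ix m (x.take (k + 1))).indicator (fun _ => f (k + 1) - f k) t := by
  classical
  have filter_lt : (Finset.range x.length).filter (· < nfun m x t) = Finset.range (nfun m x t) := by
    ext k
    simpa using fun hk => hk.trans_le nfun_le_length
  have sum_eq : ∑ k ∈ Finset.range x.length,
      (Ix m (x.take (k + 1))).indicator (fun _ => f (k + 1) - f k) t = f (nfun m x t) - f 0 := by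
    rw [← Finset.sum_range_sub, ← filter_lt, Finset.sum_filter]
    refine Finset.sum_congr rfl fun k hk => ?_
    simp only [Set.indicator_apply, mem_Ix_take_succ_iff_lt_nfun (Finset.mem_range.mp hk)]
  rw [sum_eq, add_sub_cancel]

end NestedIntervals

section Integration

variable {E : Type*} [NormedAddCommGroup E]

lemma intervalIntegrable_indicator_Ix (x : List (Fin m)) (c : E) :
    IntervalIntegrable ((Ix m x).indicator fun _ => c) volume 0 1 :=
  intervalIntegrable_iff.mpr ((integrableOn_const (by simp)).indicator (measurableSet_Ix x))

lemma intervalIntegrable_sum_indicator_Ix_take (x : List (Fin m)) (c : ℕ → E) :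
    IntervalIntegrable (fun t => ∑ k ∈ Finset.range x.length,
      (Ix m (x.take (k + 1))).indicator (fun _ => c k) t) volume 0 1 := by
  simpa only [Finset.sum_fn] using IntervalIntegrable.sum (Finset.range x.length)
    fun k _ => intervalIntegrable_indicator_Ix (x.take (k + 1)) (c k)

lemma intervalIntegrable_comp_nfun (x : List (Fin m)) (f : ℕ → E) :
    IntervalIntegrable (fun t => f (nfun m x t)) volume 0 1 := by
  simp only [apply_nfun_eq_add_sum_indicator f]
  exact intervalIntegrable_const.add (intervalIntegrable_sum_indicator_Ix_take x _)

variable [NormedSpace ℝ E] [CompleteSpace E]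

lemma integral_indicator_Ix (x : List (Fin m)) (c : E) :
    ∫ t in (0 : ℝ)..1, (Ix m x).indicator (fun _ => c) t = ((m : ℝ) ^ x.length)⁻¹ • c := by
  rw [intervalIntegral.integral_of_le zero_le_one, ← integral_Icc_eq_integral_Ioc,
    setIntegral_indicator (measurableSet_Ix x),
    Set.inter_eq_right.mpr (Ix_subset_Icc_zero_one x), setIntegral_const, volume_real_Ix]

lemma integral_comp_nfun (x : List (Fin m)) (f : ℕ → E) :
    ∫ t in (0 : ℝ)..1, f (nfun m x t) =
      f 0 + ∑ k ∈ Finset.range x.length, ((m : ℝ) ^ (k + 1))⁻¹ • (f (k + 1) - f k) := by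
  simp only [apply_nfun_eq_add_sum_indicator f]
  rw [intervalIntegral.integral_add intervalIntegrable_const
      (intervalIntegrable_sum_indicator_Ix_take x _),
    intervalIntegral.integral_finsetSum fun _ _ => intervalIntegrable_indicator_Ix _ _,
    intervalIntegral.integral_const, sub_zero, one_smul]
  congr 1
  refine Finset.sum_congr rfl fun k hk => ?_
  rw [integral_indicator_Ix, List.length_take_of_le (Finset.mem_range.mp hk)]

end Integration

/-- The value of the kernel `K_m^j(x, ·)` outside `I_{(x,j)}`, for `|x| = N`, as a function of
`n = n(x, t)`. Points outside `I_{x^{-(|x|-1)}}` are covered by `n = 0`, the value that `nfun` takes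
there, and `(p/m)^{-n}` is written as `(m/p)^n`. -/
noncomputable def kernelWeight (m : ℕ) (p : ℝ) (N n : ℕ) : ℝ :=
  p ^ N * (1 - (m : ℝ) * (1 - p) / (m - p) * (1 - (m / p) ^ n))

section Kernel

variable {p : ℝ}

lemma kernelWeight_zero_right (N : ℕ) : kernelWeight m p N 0 = p ^ N := by
  simp [kernelWeight]

lemma kernelWeight_self (hp : p ≠ 0) (N : ℕ) :
    kernelWeight m p N N = p ^ N - (m : ℝ) * (1 - p) / (m - p) * (p ^ N - (m : ℝ) ^ N) := by
  have hcancel : p ^ N * (m / p) ^ N = (m : ℝ) ^ N := by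
    rw [← mul_pow, mul_div_cancel₀ _ hp]
  rw [kernelWeight, ← hcancel]
  ring

lemma Kker_eq_kernelWeight_sub_indicator (hp : p ≠ 0) {x : List (Fin m)} (hx : x ≠ [])
    (j : Fin m) (t : ℝ) :
    Kker m p x j t = kernelWeight m p x.length (nfun m x t) -
      (Ix m (x ++ [j])).indicator (fun _ => (m : ℝ) ^ (x.length + 1)) t := by
  by_cases ht : t ∈ Ix m (x ++ [j])
  · have htx : t ∈ Ix m x := Ix_subset_Ix_of_prefix (List.prefix_append x [j]) ht
    rw [Kker, if_pos ht, Set.indicator_of_mem ht, nfun_eq_length_of_mem hx htx,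
      kernelWeight_self hp]
  · have hfirst : t ∈ Ix m (x.take 1) ↔ 0 < nfun m x t :=
      mem_Ix_take_succ_iff_lt_nfun (List.length_pos_iff.mpr hx)
    have hpow : (p / m) ^ (-(nfun m x t : ℤ)) = ((m : ℝ) / p) ^ nfun m x t := by
      rw [zpow_neg, zpow_natCast, ← inv_pow, inv_div]
    rw [Kker, if_neg ht, Set.indicator_of_notMem ht, sub_zero, kernelWeight, hpow]
    by_cases htx : t ∈ Ix m (x.take 1)
    · rw [Set.indicator_of_mem htx, mul_one]
    · have hn : nfun m x t = 0 := Nat.eq_zero_of_not_pos (mt hfirst.mpr htx)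
      rw [hn, Set.indicator_of_notMem htx, pow_zero, sub_self, mul_zero, mul_zero]

lemma inv_pow_mul_kernelWeight_succ_sub (hm : m ≠ 0) (hp : p ≠ 0) (hpm : p ≠ m) (N k : ℕ) :
    ((m : ℝ) ^ (k + 1))⁻¹ * (kernelWeight m p N (k + 1) - kernelWeight m p N k) =
      p ^ N * (p⁻¹ ^ (k + 1) - p⁻¹ ^ k) := by
  have hm' : (m : ℝ) ≠ 0 := Nat.cast_ne_zero.mpr hm
  have hsub : (m : ℝ) - p ≠ 0 := sub_ne_zero.mpr hpm.symm
  simp only [kernelWeight, div_pow, inv_pow, pow_succ]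
  field_simp
  ring

lemma integral_kernelWeight_nfun (hm : m ≠ 0) (hp : p ≠ 0) (hpm : p ≠ m) (x : List (Fin m)) :
    ∫ t in (0 : ℝ)..1, kernelWeight m p x.length (nfun m x t) = 1 := by
  simp only [integral_comp_nfun, smul_eq_mul, inv_pow_mul_kernelWeight_succ_sub hm hp hpm,
    ← Finset.mul_sum, Finset.sum_range_sub, kernelWeight_zero_right, pow_zero]
  rw [mul_sub, ← mul_pow, mul_inv_cancel₀ hp, one_pow, mul_one, add_sub_cancel]

end Kernel

theorem stmt12_general {p : ℝ} (hp : p ≠ 0) (hpm : p ≠ m) {x : List (Fin m)} (hx : x ≠ [])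
    (j : Fin m) : ∫ t in (0 : ℝ)..1, Kker m p x j t = 0 := by
  have hm : m ≠ 0 := j.pos.ne'
  have hpow : (m : ℝ) ^ (x.length + 1) ≠ 0 := pow_ne_zero _ (Nat.cast_ne_zero.mpr hm)
  simp only [Kker_eq_kernelWeight_sub_indicator hp hx]
  rw [intervalIntegral.integral_sub (intervalIntegrable_comp_nfun x _)
      (intervalIntegrable_indicator_Ix _ _),
    integral_kernelWeight_nfun hm hp hpm, integral_indicator_Ix, List.length_append,
    List.length_singleton, smul_eq_mul, inv_mul_cancel₀ hpow, sub_self]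

end BranchingTree

theorem stmt12 (m : ℕ) (hm : 2 ≤ m) (β : ℝ) (hβ0 : 0 < β) (hβ1 : β < 1 / 2)
    (p : ℝ) (hp : p = β / (1 - β)) :
    ∀ x : List (Fin m), x ≠ [] → ∀ j : Fin m,
      ∫ t in (0:ℝ)..1, Kker m p x j t = 0 := by
  intro x hx j
  have hp0 : 0 < p := hp ▸ div_pos hβ0 (by linarith)
  have hp1 : p < 1 := hp ▸ (div_lt_one (by linarith)).mpr (by linarith)
  have hpm : p < m := hp1.trans (by exact_mod_cast hm)
  exact stmt12_general hp0.ne' hpm.ne hx j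
end
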